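/- For every natural number n, M(n) ≥ p_ℙ(n). -/

import Mathlib

/-- The product, with multiplicity, of the factorials of the elements of a multiset. -/
def factorialProd (A : Multiset ℕ) : ℕ := (A.map Nat.factorial).prod

/-- `M n`: the number of distinct multinomial coefficients with upper entry `n`, i.e. the
number of distinct values of `∏_{j ∈ λ} j!` as `λ` ranges over the partitions of `n`. -/
noncomputable def M (n : ℕ) : ℕ :=
  Set.ncard {v : ℕ | ∃ P : Nat.Partition n, factorialProd P.parts = v}

/-- `pP n`: the number of partitions of `n` all of whose parts are prime. -/
noncomputable def pP (n : ℕ) : ℕ :=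
  Set.ncard {P : Nat.Partition n | ∀ j ∈ P.parts, Nat.Prime j}

lemma fp_cons (a : ℕ) (A : Multiset ℕ) :
    factorialProd (a ::ₘ A) = a.factorial * factorialProd A := by
  simp [factorialProd]

lemma fp_dvd {A : Multiset ℕ} {p : ℕ} (hp : p.Prime) (h : p ∣ factorialProd A) :
    ∃ j ∈ A, p ≤ j := by
  induction A using Multiset.induction_on with
  | empty =>
    simp [factorialProd] at h
    exact absurd h hp.one_lt.ne'
  | cons a A ih =>
    rw [fp_cons] at h
    rcases hp.dvd_mul.1 h with h | h
    · exact ⟨a, by simp, hp.dvd_factorial.1 h⟩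
    · obtain ⟨j, hj, hle⟩ := ih h
      exact ⟨j, by simp [hj], hle⟩

lemma dvd_fp {A : Multiset ℕ} {p : ℕ} (hp : p.Prime) (h : p ∈ A) : p ∣ factorialProd A := by
  obtain ⟨B, rfl⟩ := Multiset.exists_cons_of_mem h
  rw [fp_cons]
  exact Dvd.dvd.mul_right (hp.dvd_factorial.2 le_rfl) _

lemma ms_max {A : Multiset ℕ} (h : A ≠ 0) : ∃ a ∈ A, ∀ j ∈ A, j ≤ a := by
  obtain ⟨x, hx⟩ := Multiset.exists_mem_of_ne_zero h
  obtain ⟨a, ha, hm⟩ := Finset.exists_max_image A.toFinset id ⟨x, by simpa using hx⟩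
  exact ⟨a, by simpa using ha, fun j hj => hm j (by simpa using hj)⟩

lemma fp_inj (k : ℕ) : ∀ A B : Multiset ℕ, A.card = k → (∀ j ∈ A, j.Prime) →
    (∀ j ∈ B, j.Prime) → factorialProd A = factorialProd B → A = B := by
  induction k with
  | zero =>
    intro A B hk hA hB h
    rw [Multiset.card_eq_zero] at hk
    subst hk
    by_contra hne
    obtain ⟨b, hb⟩ := Multiset.exists_mem_of_ne_zero (Ne.symm hne)
    obtain ⟨j, hj, _⟩ := fp_dvd (hB b hb) (h ▸ dvd_fp (hB b hb) hb)
    simp at hj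
  | succ k ih =>
    intro A B hk hA hB h
    have hA0 : A ≠ 0 := by
      rintro rfl
      simp at hk
    obtain ⟨a, ha, hma⟩ := ms_max hA0
    obtain ⟨j, hj, haj⟩ := fp_dvd (hA a ha) (h ▸ dvd_fp (hA a ha) ha)
    obtain ⟨i, hi, hji⟩ := fp_dvd (hB j hj) (h.symm ▸ dvd_fp (hB j hj) hj)
    have hja : j = a := le_antisymm (hji.trans (hma i hi)) haj
    subst hja
    obtain ⟨A', rfl⟩ := Multiset.exists_cons_of_mem ha
    obtain ⟨B', rfl⟩ := Multiset.exists_cons_of_mem hj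
    rw [fp_cons, fp_cons] at h
    have h' := Nat.eq_of_mul_eq_mul_left (Nat.factorial_pos j) h
    rw [ih A' B' (by simpa using hk) (fun x hx => hA x (by simp [hx]))
      (fun x hx => hB x (by simp [hx])) h']

/-- For every natural number `n`, `M(n) ≥ p_ℙ(n)`. -/
theorem M_ge_pP (n : ℕ) : pP n ≤ M n := by
  refine Set.ncard_le_ncard_of_injOn (fun P => factorialProd P.parts) ?_ ?_ ?_
  · intro P _
    exact ⟨P, rfl⟩
  · intro P hP Q hQ h
    exact Nat.Partition.ext (fp_inj _ _ _ rfl hP hQ h)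
  · exact Set.finite_range (fun P : Nat.Partition n => factorialProd P.parts)
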